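/- The set of total canonical term graphs over a signature Σ, equipped with the rigid distance d†(g,h) = 2^{−sim†(g,h)}, is a complete ultrametric space (every Cauchy sequence converges). -/

import Mathlib

set_option autoImplicit false

namespace TGR

/-- A signature: a type of symbols, each with a finite arity. -/
structure Signature where
  Sym : Type
  ar : Sym → ℕ

/-- The signature `Σ_⊥`: `Σ` extended by a fresh nullary symbol `⊥` (here `none`). -/
def Signature.bot (S : Signature) : Signature where
  Sym := Option S.Sym
  ar := fun o => match o with
    | none => 0
    | some f => S.ar f

/-- A rooted graph over a signature `S` with nodes `N`: a labelling, a successor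
function respecting arities, and a root node. -/
structure TermGraph (S : Signature) (N : Type) where
  lab : N → S.Sym
  suc : (n : N) → Fin (S.ar (lab n)) → N
  root : N

namespace TermGraph

variable {S : Signature} {N M K : Type}

/-- `g.IsPos π n`: `π` is a position (path of successor indices from the root) of node `n`. -/
inductive IsPos (g : TermGraph S N) : List ℕ → N → Prop
  | root : IsPos g [] g.root
  | step {π : List ℕ} {n : N} (h : IsPos g π n) (i : Fin (S.ar (g.lab n))) :
      IsPos g (π ++ [(i : ℕ)]) (g.suc n i)

/-- All nodes are reachable from the root. -/
def Reachable (g : TermGraph S N) : Prop :=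
  ∀ n : N, ∃ π : List ℕ, g.IsPos π n

/-- The set of positions of `g`. -/
def pos (g : TermGraph S N) : Set (List ℕ) :=
  {π | ∃ n : N, g.IsPos π n}

/-- The set of positions of node `n` in `g`. -/
def nodePos (g : TermGraph S N) (n : N) : Set (List ℕ) :=
  {π | g.IsPos π n}

/-- `π ∼_g π'`: `π` and `π'` are positions of the same node. -/
def Aliases (g : TermGraph S N) (π π' : List ℕ) : Prop :=
  ∃ n : N, g.IsPos π n ∧ g.IsPos π' n

/-- A position is acyclic if it passes no node twice. -/
def IsAcyclicPos (g : TermGraph S N) (π : List ℕ) : Prop :=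
  ∀ (π₁ π₂ : List ℕ) (n : N), π₁ <+: π₂ → π₂ <+: π →
    g.IsPos π₁ n → g.IsPos π₂ n → π₁ = π₂

/-- The set of acyclic positions of node `n` in `g`. -/
def nodePosAcy (g : TermGraph S N) (n : N) : Set (List ℕ) :=
  {π | g.IsPos π n ∧ g.IsAcyclicPos π}

/-- The set of acyclic positions of `g`. -/
def posAcy (g : TermGraph S N) : Set (List ℕ) :=
  {π | (∃ n : N, g.IsPos π n) ∧ g.IsAcyclicPos π}

/-- The depth of a node: the minimal length of its positions. -/
noncomputable def depth (g : TermGraph S N) (n : N) : ℕ :=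
  sInf {k : ℕ | ∃ π : List ℕ, g.IsPos π n ∧ π.length = k}

open Classical in
/-- The (unique) node at a position. -/
noncomputable def nodeAt (g : TermGraph S N) (π : List ℕ) : N :=
  if h : ∃ n : N, g.IsPos π n then h.choose else g.root

/-- The label `g(π)` at a position. -/
noncomputable def labAt (g : TermGraph S N) (π : List ℕ) : S.Sym :=
  g.lab (g.nodeAt π)

/-- `Δ`-homomorphism: root, labelling and successor conditions, the latter two
suspended on `Δ`-labelled nodes. -/
structure IsDHom (Δ : Set S.Sym) (g : TermGraph S N) (h : TermGraph S M)
    (φ : N → M) : Prop where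
  root_eq : φ g.root = h.root
  lab_eq : ∀ n : N, g.lab n ∉ Δ → h.lab (φ n) = g.lab n
  suc_eq : ∀ n : N, g.lab n ∉ Δ → ∀ (i : ℕ) (hi : i < S.ar (g.lab n))
      (hi' : i < S.ar (h.lab (φ n))),
      φ (g.suc n ⟨i, hi⟩) = h.suc (φ n) ⟨i, hi'⟩

/-- Rigidity: `Pa_g(n) = Pa_h(φ n)` for all non-`Δ`-labelled nodes `n`. -/
def IsRigid (Δ : Set S.Sym) (g : TermGraph S N) (h : TermGraph S M)
    (φ : N → M) : Prop :=
  ∀ n : N, g.lab n ∉ Δ → g.nodePosAcy n = h.nodePosAcy (φ n)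

/-- Rigid `Δ`-homomorphism. -/
def IsRigidDHom (Δ : Set S.Sym) (g : TermGraph S N) (h : TermGraph S M)
    (φ : N → M) : Prop :=
  IsDHom Δ g h φ ∧ IsRigid Δ g h φ

/-- Isomorphism of term graphs: a homomorphism with an inverse homomorphism. -/
def Iso (g : TermGraph S N) (h : TermGraph S M) : Prop :=
  ∃ (φ : N → M) (ψ : M → N), IsDHom ∅ g h φ ∧ IsDHom ∅ h g ψ ∧
    (∀ n : N, ψ (φ n) = n) ∧ (∀ m : M, φ (ψ m) = m)

/-- A partial term graph (over `Σ_⊥`) is total if no node is labelled `⊥`. -/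
def Total (g : TermGraph S.bot N) : Prop := ∀ n : N, g.lab n ≠ none

/-- Rigid `⊥`-homomorphism between partial term graphs. -/
def IsRigidBotHom (g : TermGraph S.bot N) (h : TermGraph S.bot M)
    (φ : N → M) : Prop :=
  IsRigidDHom ({none} : Set (Option S.Sym)) g h φ

/-- The `⊥`-depth of a partial term graph: the minimal depth of a `⊥`-labelled
node, `ω` (`⊤`) if there is none. -/
noncomputable def botDepth (g : TermGraph S.bot N) : ℕ∞ :=
  sInf {d : ℕ∞ | ∃ n : N, g.lab n = none ∧ (g.depth n : ℕ∞) = d}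

/-- `m` is an acyclic predecessor of `n`: some acyclic position `π ++ [i]` of `n`
has `π` a position of `m`. -/
def acyPred (g : TermGraph S N) (n : N) : Set N :=
  {m | ∃ (π : List ℕ) (i : ℕ), (π ++ [i]) ∈ g.nodePosAcy n ∧ g.IsPos π m}

/-- Retained nodes of the truncation at depth `d`: the least set of nodes
containing all nodes of depth `< d` and closed under acyclic predecessors. -/
inductive Retained (g : TermGraph S N) (d : ℕ) : N → Prop
  | shallow {n : N} : g.depth n < d → Retained g d n
  | pred {n m : N} : Retained g d n → m ∈ g.acyPred n → Retained g d m

theorem not_retained_zero {g : TermGraph S N} (n : N) : ¬ g.Retained 0 n := by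
  intro h
  induction h with
  | shallow hd => exact Nat.not_lt_zero _ hd
  | pred _ _ ih => exact ih

/-- Fringe nodes of the truncation at depth `d` (a pair `(n, i)` stands for the
fresh node `n^i`); at depth `0` the fringe is just (a copy of) the root. -/
def IsFringe (g : TermGraph S.bot N) (d : ℕ) (p : N × ℕ) : Prop :=
  if d = 0 then p = (g.root, 0)
  else g.Retained d p.1 ∧ ∃ h : p.2 < S.bot.ar (g.lab p.1),
    (¬ g.Retained d (g.suc p.1 ⟨p.2, h⟩) ∨
      (d - 1 ≤ g.depth p.1 ∧ p.1 ∉ g.acyPred (g.suc p.1 ⟨p.2, h⟩)))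

/-- The node set of the rigid truncation: retained nodes plus fringe nodes. -/
def TNode (g : TermGraph S.bot N) (d : ℕ) : Type :=
  {x : N ⊕ (N × ℕ) // Sum.elim (g.Retained d) (g.IsFringe d) x}

def truncLab (g : TermGraph S.bot N) (d : ℕ) (x : TNode g d) : S.bot.Sym :=
  Sum.elim (fun n => g.lab n) (fun _ => none) x.1

open Classical in
noncomputable def truncSuc (g : TermGraph S.bot N) (d : ℕ) :
    (x : TNode g d) → Fin (S.bot.ar (truncLab g d x)) → TNode g d
  | ⟨Sum.inl n, hn⟩ => fun i =>
      if hf : g.IsFringe d (n, (i : ℕ)) then ⟨Sum.inr (n, (i : ℕ)), hf⟩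
      else
        ⟨Sum.inl (g.suc n ⟨(i : ℕ), i.isLt⟩), by
          show g.Retained d (g.suc n ⟨(i : ℕ), i.isLt⟩)
          rcases Nat.eq_zero_or_pos d with hd | hd
          · subst hd
            exact ((not_retained_zero n) hn).elim
          · by_contra hc
            apply hf
            show g.IsFringe d (n, (i : ℕ))
            unfold IsFringe
            rw [if_neg (Nat.pos_iff_ne_zero.mp hd)]
            exact ⟨hn, i.isLt, Or.inl hc⟩⟩
  | ⟨Sum.inr p, hp⟩ => fun i => absurd i.isLt (Nat.not_lt_zero _)

noncomputable def truncRoot (g : TermGraph S.bot N) (d : ℕ) : TNode g d :=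
  if hd : d = 0 then
    ⟨Sum.inr (g.root, 0), by
      subst hd
      show g.IsFringe 0 (g.root, 0)
      simp [IsFringe]⟩
  else
    ⟨Sum.inl g.root, by
      show g.Retained d g.root
      exact Retained.shallow (lt_of_le_of_lt
        (Nat.sInf_le ⟨[], IsPos.root, rfl⟩) (Nat.pos_of_ne_zero hd))⟩

/-- The rigid truncation `g†d` of a partial term graph at finite depth `d`. -/
noncomputable def trunc (g : TermGraph S.bot N) (d : ℕ) :
    TermGraph S.bot (TNode g d) where
  lab := truncLab g d
  suc := truncSuc g d
  root := truncRoot g d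

end TermGraph

/-- A canonical term graph: a term graph whose nodes are sets of positions,
each node being exactly its set of positions, with all nodes reachable. -/
structure CTG (S : Signature) where
  nodes : Set (Set (List ℕ))
  tg : TermGraph S ↥nodes
  reach : tg.Reachable
  canon : ∀ n : ↥nodes, (n : Set (List ℕ)) = tg.nodePos n

namespace CTG

variable {S : Signature}

def pos (g : CTG S) : Set (List ℕ) := g.tg.pos
def Aliases (g : CTG S) : List ℕ → List ℕ → Prop := g.tg.Aliases
def posAcy (g : CTG S) : Set (List ℕ) := g.tg.posAcy
noncomputable def labAt (g : CTG S) : List ℕ → S.Sym := g.tg.labAt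

/-- A canonical partial term graph is total if it has no `⊥`-labelled node. -/
def Total (g : CTG S.bot) : Prop := g.tg.Total

/-- The rigid partial order `g ≤⊥r h`: there is a rigid `⊥`-homomorphism
from `g` to `h`. -/
def LeR (g h : CTG S.bot) : Prop :=
  ∃ φ, TermGraph.IsRigidBotHom g.tg h.tg φ

noncomputable def botDepth (g : CTG S.bot) : ℕ∞ := g.tg.botDepth

/-- `TruncIso g h d`: the rigid truncations of `g` and `h` at depth `d ≤ ω`
are isomorphic (`g†ω = g`). -/
def TruncIso {N M : Type} (g : TermGraph S.bot N) (h : TermGraph S.bot M)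
    (d : ℕ∞) : Prop :=
  (d = ⊤ → TermGraph.Iso g h) ∧
  ∀ k : ℕ, d = (k : ℕ∞) → TermGraph.Iso (g.trunc k) (h.trunc k)

/-- The rigid similarity `sim†(g,h)`: the maximal `d ≤ ω` such that
`g†d ≅ h†d`. -/
noncomputable def simr (g h : CTG S.bot) : ℕ∞ :=
  sSup {d : ℕ∞ | TruncIso g.tg h.tg d}

open Classical in
/-- The rigid distance `d†(g,h) = 2^{-sim†(g,h)}` (with `2^{-ω} = 0`). -/
noncomputable def rdist (g h : CTG S.bot) : ℝ :=
  if simr g h = ⊤ then 0 else (1 / 2 : ℝ) ^ (simr g h).toNat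

def IsUB (A : Set (CTG S.bot)) (u : CTG S.bot) : Prop := ∀ g ∈ A, LeR g u

def IsLubR (A : Set (CTG S.bot)) (u : CTG S.bot) : Prop :=
  IsUB A u ∧ ∀ v, IsUB A v → LeR u v

def IsLB (A : Set (CTG S.bot)) (l : CTG S.bot) : Prop := ∀ g ∈ A, LeR l g

def IsGlbR (A : Set (CTG S.bot)) (l : CTG S.bot) : Prop :=
  IsLB A l ∧ ∀ m, IsLB A m → LeR m l

/-- A directed set: non-empty and every two elements have an upper bound inside. -/
def DirectedR (A : Set (CTG S.bot)) : Prop :=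
  A.Nonempty ∧ ∀ g ∈ A, ∀ h ∈ A, ∃ u ∈ A, LeR g u ∧ LeR h u

/-- `L` is the limit inferior `⨆_{β<α} ⨅_{β≤ι<α} f ι` of the ordinal-indexed
sequence `(f ι)_{ι<α}` in the rigid partial order. -/
def IsLiminfR (α : Ordinal.{0}) (f : Ordinal.{0} → CTG S.bot) (L : CTG S.bot) : Prop :=
  ∃ inf : Ordinal.{0} → CTG S.bot,
    (∀ β < α, IsGlbR {g | ∃ ι, β ≤ ι ∧ ι < α ∧ g = f ι} (inf β)) ∧
    IsLubR {g | ∃ β < α, g = inf β} L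

/-- Cauchy condition for an ordinal-indexed sequence w.r.t. the rigid distance. -/
def OrdCauchy (α : Ordinal.{0}) (f : Ordinal.{0} → CTG S.bot) : Prop :=
  ∀ ε : ℝ, 0 < ε → ∃ β < α, ∀ ι ι' : Ordinal.{0},
    β < ι → ι < ι' → ι' < α → rdist (f ι) (f ι') < ε

/-- Convergence of an ordinal-indexed sequence to `g` w.r.t. the rigid distance. -/
def OrdTendsto (α : Ordinal.{0}) (f : Ordinal.{0} → CTG S.bot) (g : CTG S.bot) : Prop :=
  ∀ ε : ℝ, 0 < ε → ∃ β < α, ∀ ι : Ordinal.{0}, β < ι → ι < α → rdist (f ι) g < ε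

/-- `u` is the unravelling of `g`: the term tree with the same positions and
labels as `g` and trivial aliasing. -/
def IsUnravelling (g u : CTG S) : Prop :=
  u.pos = g.pos ∧ (∀ π ∈ g.pos, u.labAt π = g.labAt π) ∧
  (∀ π π' : List ℕ, u.Aliases π π' ↔ (π ∈ g.pos ∧ π = π'))

end CTG

/-- A labelled quotient tree over a signature `S`. -/
structure LQT (S : Signature) where
  P : Set (List ℕ)
  nonempty : P.Nonempty
  l : List ℕ → S.Sym
  rel : List ℕ → List ℕ → Prop
  rel_refl : ∀ π ∈ P, rel π π
  rel_symm : ∀ π π' : List ℕ, rel π π' → rel π' π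
  rel_trans : ∀ π π' π'' : List ℕ, rel π π' → rel π' π'' → rel π π''
  rel_mem : ∀ π π' : List ℕ, rel π π' → π ∈ P ∧ π' ∈ P
  reach_mem : ∀ (π : List ℕ) (i : ℕ), π ++ [i] ∈ P → π ∈ P
  reach_ar : ∀ (π : List ℕ) (i : ℕ), π ++ [i] ∈ P → i < S.ar (l π)
  congr_lab : ∀ π π' : List ℕ, rel π π' → l π = l π'
  congr_suc : ∀ (π π' : List ℕ) (i : ℕ), rel π π' → i < S.ar (l π) →
    rel (π ++ [i]) (π' ++ [i])

end TGR

namespace TGR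
namespace TermGraph

section Basics
variable {S : Signature} {N M K : Type}

theorem isPos_nil {g : TermGraph S N} {n : N} (h : g.IsPos [] n) : n = g.root := by
  generalize hp : ([] : List ℕ) = p at h
  cases h with
  | root => rfl
  | step h i => simp at hp

theorem isPos_snoc {g : TermGraph S N} {π : List ℕ} {i : ℕ} {n' : N} :
    g.IsPos (π ++ [i]) n' ↔
      ∃ n, g.IsPos π n ∧ ∃ hi : i < S.ar (g.lab n), g.suc n ⟨i, hi⟩ = n' := by
  constructor
  · intro h
    generalize hp : π ++ [i] = p at h
    cases h with
    | root => simp at hp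
    | @step π' n h j =>
      obtain ⟨h1, h2⟩ := List.append_inj' hp rfl
      subst h1
      simp at h2
      subst h2
      exact ⟨n, h, j.2, rfl⟩
  · rintro ⟨n, h, hi, rfl⟩
    exact IsPos.step h ⟨i, hi⟩

theorem isPos_det {g : TermGraph S N} {π : List ℕ} {n m : N}
    (h : g.IsPos π n) (h' : g.IsPos π m) : n = m := by
  induction h generalizing m with
  | root => exact (isPos_nil h').symm
  | step h i ih =>
    obtain ⟨k, hk, hi, rfl⟩ := isPos_snoc.1 h'
    obtain rfl := ih hk
    rfl

theorem isPos_prefix {g : TermGraph S N} {π ρ : List ℕ} {n : N}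
    (h : g.IsPos (π ++ ρ) n) : ∃ m, g.IsPos π m := by
  induction ρ using List.reverseRecOn generalizing n with
  | nil => exact ⟨n, by simpa using h⟩
  | append_singleton ρ i ih =>
    rw [← List.append_assoc] at h
    obtain ⟨k, hk, _⟩ := isPos_snoc.1 h
    exact ih hk

theorem isPos_replace {g : TermGraph S N} {π₁ π₂ ρ : List ℕ} {m n : N}
    (h1 : g.IsPos π₁ m) (h2 : g.IsPos π₂ m) (h : g.IsPos (π₂ ++ ρ) n) :
    g.IsPos (π₁ ++ ρ) n := by
  induction ρ using List.reverseRecOn generalizing n with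
  | nil =>
    rw [List.append_nil] at *
    obtain rfl := isPos_det h2 h
    exact h1
  | append_singleton ρ i ih =>
    rw [← List.append_assoc] at *
    obtain ⟨k, hk, hi⟩ := isPos_snoc.1 h
    exact isPos_snoc.2 ⟨k, ih hk, hi⟩

theorem acyclic_prefix {g : TermGraph S N} {π ρ : List ℕ} (h : g.IsAcyclicPos (π ++ ρ)) :
    g.IsAcyclicPos π := fun π₁ π₂ n h1 h2 p1 p2 =>
  h π₁ π₂ n h1 (h2.trans (List.prefix_append _ _)) p1 p2

theorem exists_min_pos {g : TermGraph S N} (hg : g.Reachable) (n : N) :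
    ∃ π ∈ g.nodePosAcy n, π.length = g.depth n := by
  have hne : {k : ℕ | ∃ π : List ℕ, g.IsPos π n ∧ π.length = k}.Nonempty := by
    obtain ⟨π, h⟩ := hg n
    exact ⟨_, π, h, rfl⟩
  obtain ⟨π, h, hl⟩ := Nat.sInf_mem hne
  refine ⟨π, ⟨h, ?_⟩, hl⟩
  rintro π₁ π₂ m ⟨a, rfl⟩ ⟨b, rfl⟩ p1 p2
  have h3 := isPos_replace p1 p2 h
  have h4 : sInf {k : ℕ | ∃ π : List ℕ, g.IsPos π n ∧ π.length = k} ≤ (π₁ ++ b).length :=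
    Nat.sInf_le ⟨_, h3, rfl⟩
  rw [← hl] at h4
  simp at h4
  simp [h4]

theorem depth_le {g : TermGraph S N} {π : List ℕ} {n : N} (h : g.IsPos π n) :
    g.depth n ≤ π.length := Nat.sInf_le ⟨π, h, rfl⟩

theorem depth_eq {g : TermGraph S N} {h : TermGraph S M} (hg : g.Reachable)
    (hh : h.Reachable) {n : N} {m : M} (e : g.nodePosAcy n = h.nodePosAcy m) :
    g.depth n = h.depth m := by
  apply le_antisymm
  · obtain ⟨π, hp, hl⟩ := exists_min_pos hh m
    rw [← e] at hp
    exact hl ▸ depth_le hp.1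
  · obtain ⟨π, hp, hl⟩ := exists_min_pos hg n
    rw [e] at hp
    exact hl ▸ depth_le hp.1

theorem node_eq {g : TermGraph S N} (hg : g.Reachable) {n m : N}
    (e : g.nodePosAcy n = g.nodePosAcy m) : n = m := by
  obtain ⟨π, hp, hl⟩ := exists_min_pos hg n
  have hp' := hp
  rw [e] at hp'
  exact isPos_det hp.1 hp'.1

theorem mem_acyPred {g : TermGraph S N} {n m : N} :
    m ∈ g.acyPred n ↔ ∃ (π : List ℕ) (i : ℕ), (π ++ [i]) ∈ g.nodePosAcy n ∧
      π ∈ g.nodePosAcy m := by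
  constructor
  · rintro ⟨π, i, h, h'⟩
    exact ⟨π, i, h, h', acyclic_prefix h.2⟩
  · rintro ⟨π, i, h, h'⟩
    exact ⟨π, i, h, h'.1⟩

theorem acyPred_transfer {g : TermGraph S N} {h : TermGraph S M} {n n' : N} {m m' : M}
    (e : g.nodePosAcy n = h.nodePosAcy m) (e' : g.nodePosAcy n' = h.nodePosAcy m') :
    n ∈ g.acyPred n' ↔ m ∈ h.acyPred m' := by
  rw [mem_acyPred, mem_acyPred, e, e']

def NF (g : TermGraph S N) (d : ℕ) (n : N) (i : Fin (S.ar (g.lab n))) : Prop :=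
  g.Retained d (g.suc n i) ∧ (d - 1 ≤ g.depth n → n ∈ g.acyPred (g.suc n i))

/-- Half of the similarity at depth `d`. -/
def HS (d : ℕ) (g : TermGraph S N) (h : TermGraph S M) : Prop :=
  ∀ n, g.Retained d n → ∃ m, g.nodePosAcy n = h.nodePosAcy m ∧ g.lab n = h.lab m ∧
    ∀ (i : ℕ) (hi : i < S.ar (g.lab n)) (hi' : i < S.ar (h.lab m)), g.NF d n ⟨i, hi⟩ →
      g.nodePosAcy (g.suc n ⟨i, hi⟩) = h.nodePosAcy (h.suc m ⟨i, hi'⟩)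

theorem Retained.mono {g : TermGraph S N} {d e : ℕ} (hd : e ≤ d) {n : N}
    (h : g.Retained e n) : g.Retained d n := by
  induction h with
  | shallow h => exact .shallow (h.trans_le hd)
  | pred _ h ih => exact .pred ih h

theorem NF.mono {g : TermGraph S N} {d e : ℕ} (hd : e ≤ d) {n : N}
    {i : Fin (S.ar (g.lab n))} (h : g.NF e n i) : g.NF d n i :=
  ⟨h.1.mono hd, fun h' => h.2 (by omega)⟩

theorem HS.mono {g : TermGraph S N} {h : TermGraph S M} {d e : ℕ} (hd : e ≤ d)
    (H : HS d g h) : HS e g h := by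
  intro n hn
  obtain ⟨m, h1, h2, h3⟩ := H n (hn.mono hd)
  exact ⟨m, h1, h2, fun i hi hi' hf => h3 i hi hi' (hf.mono hd)⟩

/-- Matching of retained nodes. -/
def RM (d : ℕ) (g : TermGraph S N) (h : TermGraph S M) : Prop :=
  ∀ n, g.Retained d n → ∃ m, g.nodePosAcy n = h.nodePosAcy m

theorem HS.rm {g : TermGraph S N} {h : TermGraph S M} {d : ℕ} (H : HS d g h) : RM d g h :=
  fun n hn => let ⟨m, h1, _⟩ := H n hn; ⟨m, h1⟩

theorem RM.retained {g : TermGraph S N} {h : TermGraph S M} (hg : g.Reachable)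
    (hh : h.Reachable) {d : ℕ} (H : RM d g h) {n : N} {m : M} (hn : g.Retained d n)
    (e : g.nodePosAcy n = h.nodePosAcy m) : h.Retained d m := by
  induction hn generalizing m with
  | shallow hd => exact .shallow (depth_eq hg hh e ▸ hd)
  | pred hr hp ih =>
    obtain ⟨m', e'⟩ := H _ hr
    exact .pred (ih e') ((acyPred_transfer e e').1 hp)

theorem RM.nf {g : TermGraph S N} {h : TermGraph S M} (hg : g.Reachable)
    (hh : h.Reachable) {d : ℕ} (H : RM d g h) {n : N} {m : M}
    (e : g.nodePosAcy n = h.nodePosAcy m) {i : Fin (S.ar (g.lab n))}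
    {j : Fin (S.ar (h.lab m))}
    (e' : g.nodePosAcy (g.suc n i) = h.nodePosAcy (h.suc m j)) (hf : g.NF d n i) :
    h.NF d m j :=
  ⟨H.retained hg hh hf.1 e', fun hd => (acyPred_transfer e e').1 (hf.2 (depth_eq hg hh e ▸ hd))⟩

theorem HS.trans {g : TermGraph S N} {h : TermGraph S M} {k : TermGraph S K}
    (hg : g.Reachable) (hh : h.Reachable) {d : ℕ} (H : HS d g h) (H' : HS d h k) :
    HS d g k := by
  intro n hn
  obtain ⟨m, h1, h2, h3⟩ := H n hn
  obtain ⟨l, k1, k2, k3⟩ := H' m (H.rm.retained hg hh hn h1)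
  refine ⟨l, h1.trans k1, h2.trans k2, fun i hi hi' hf => ?_⟩
  have e := h3 i hi (h2 ▸ hi) hf
  exact e.trans (k3 i _ _ (H.rm.nf hg hh h1 e hf))

theorem HS.match_pos {g : TermGraph S N} {h : TermGraph S M}
    (hh : h.Reachable) {d : ℕ} (H : HS d g h) {π : List ℕ} {n : N} (hp : g.IsPos π n)
    (hl : π.length < d) :
    ∃ m, h.IsPos π m ∧ g.nodePosAcy n = h.nodePosAcy m ∧ g.lab n = h.lab m := by
  have key : ∃ m, h.IsPos π m ∧ g.nodePosAcy n = h.nodePosAcy m := by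
    induction hp with
    | root =>
      obtain ⟨m, h1, h2, -⟩ := H g.root (.shallow ((depth_le IsPos.root).trans_lt hl))
      refine ⟨m, ?_, h1⟩
      have : ([] : List ℕ) ∈ g.nodePosAcy g.root := by
        refine ⟨IsPos.root, ?_⟩
        intro π₁ π₂ n p1 p2 _ _
        have := List.prefix_nil.1 p2
        subst this
        exact List.prefix_nil.1 p1
      rw [h1] at this
      exact this.1
    | @step π n hp i ih =>
      simp at hl
      obtain ⟨m, h1, h2⟩ := ih (by omega)
      have hn : g.Retained d n := .shallow ((depth_le hp).trans_lt (by omega))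
      obtain ⟨m', k1, k2, k3⟩ := H n hn
      obtain rfl := node_eq hh (h2.symm.trans k1)
      have hd := depth_le hp
      have hd' := depth_le (hp.step i)
      have hf : g.NF d n i := ⟨.shallow (hd'.trans_lt (by simp; omega)), fun h => by omega⟩
      have hi' : (i : ℕ) < S.ar (h.lab m) := k2 ▸ i.2
      exact ⟨_, h1.step ⟨i, hi'⟩, k3 i i.2 hi' hf⟩
  obtain ⟨m, h1, h2⟩ := key
  obtain ⟨m', k1, k2, -⟩ := H n (.shallow ((depth_le hp).trans_lt hl))
  obtain rfl := node_eq hh (h2.symm.trans k1)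
  exact ⟨m, h1, h2, k2⟩

theorem HS.aliases {g : TermGraph S N} {h : TermGraph S M}
    (hh : h.Reachable) {d : ℕ} (H : HS d g h) {π π' : List ℕ} (hl : π.length < d)
    (hl' : π'.length < d) (ha : g.Aliases π π') : h.Aliases π π' := by
  obtain ⟨n, h1, h2⟩ := ha
  obtain ⟨m, k1, k2, -⟩ := H.match_pos hh h1 hl
  obtain ⟨m', l1, l2, -⟩ := H.match_pos hh h2 hl'
  obtain rfl := node_eq hh (k2.symm.trans l2)
  exact ⟨m, k1, l1⟩

theorem IsDHom.isPos {g : TermGraph S N} {h : TermGraph S M} {φ : N → M}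
    (H : IsDHom ∅ g h φ) {π : List ℕ} {n : N} (hp : g.IsPos π n) : h.IsPos π (φ n) := by
  induction hp with
  | root =>
    rw [H.root_eq]
    exact .root
  | @step π n hp i ih =>
    have hl := H.lab_eq n (by simp)
    have hi : (i : ℕ) < S.ar (h.lab (φ n)) := by
      rw [hl]
      exact i.2
    exact isPos_snoc.2 ⟨_, ih, hi, (H.suc_eq n (by simp) i i.2 _).symm⟩

theorem iso_nodePosAcy {g : TermGraph S N} {h : TermGraph S M} {φ : N → M} {ψ : M → N}
    (H : IsDHom ∅ g h φ) (H' : IsDHom ∅ h g ψ) (l : ∀ n, ψ (φ n) = n)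
    (n : N) : g.nodePosAcy n = h.nodePosAcy (φ n) := by
  ext π
  constructor
  · rintro ⟨h1, h2⟩
    refine ⟨H.isPos h1, fun π₁ π₂ m p1 p2 q1 q2 => ?_⟩
    exact h2 π₁ π₂ _ p1 p2 (H'.isPos q1) (H'.isPos q2)
  · rintro ⟨h1, h2⟩
    refine ⟨l n ▸ H'.isPos h1, fun π₁ π₂ m p1 p2 q1 q2 => ?_⟩
    exact h2 π₁ π₂ _ p1 p2 (H.isPos q1) (H.isPos q2)

theorem Iso.symm {g : TermGraph S N} {h : TermGraph S M} (H : Iso g h) : Iso h g := by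
  obtain ⟨φ, ψ, a, b, c, d⟩ := H
  exact ⟨ψ, φ, b, a, d, c⟩

theorem Iso.hs {g : TermGraph S N} {h : TermGraph S M} (H : Iso g h) (d : ℕ) : HS d g h := by
  obtain ⟨φ, ψ, H, H', l, r⟩ := H
  intro n _
  refine ⟨φ n, iso_nodePosAcy H H' l n, (H.lab_eq n (by simp)).symm, fun i hi hi' _ => ?_⟩
  rw [iso_nodePosAcy H H' l, H.suc_eq n (by simp) i hi hi']

end Basics

section Trunc
variable {S : Signature} {N M K : Type}

theorem suc_congr (k : TermGraph S N) {x y : N} (e : x = y) {i : ℕ}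
    (hi : i < S.ar (k.lab x)) (hi' : i < S.ar (k.lab y)) :
    k.suc x ⟨i, hi⟩ = k.suc y ⟨i, hi'⟩ := by
  subst e
  rfl

theorem isFringe_iff {g : TermGraph S.bot N} {d : ℕ} (hd : d ≠ 0) {n : N} {i : ℕ} :
    g.IsFringe d (n, i) ↔ g.Retained d n ∧ ∃ hi : i < S.bot.ar (g.lab n), ¬ g.NF d n ⟨i, hi⟩ := by
  unfold IsFringe NF
  rw [if_neg hd]
  simp only [not_and_or, Classical.not_imp]

theorem truncSuc_inl {g : TermGraph S.bot N} {d : ℕ} (n : N) (hn : g.Retained d n)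
    (i : ℕ) (hi : i < S.bot.ar (g.lab n)) :
    (∃ hf : g.IsFringe d (n, i),
      truncSuc g d ⟨Sum.inl n, hn⟩ ⟨i, hi⟩ = ⟨Sum.inr (n, i), hf⟩) ∨
    (¬ g.IsFringe d (n, i) ∧ ∃ hr : g.Retained d (g.suc n ⟨i, hi⟩),
      truncSuc g d ⟨Sum.inl n, hn⟩ ⟨i, hi⟩ = ⟨Sum.inl (g.suc n ⟨i, hi⟩), hr⟩) := by
  by_cases hf : g.IsFringe d (n, i)
  · left
    exact ⟨hf, by simp [truncSuc, hf]; rfl⟩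
  · right
    have hr : g.Retained d (g.suc n ⟨i, hi⟩) := by
      by_contra hc
      have hd : d ≠ 0 := by
        rintro rfl
        exact not_retained_zero n hn
      exact hf ((isFringe_iff hd).2 ⟨hn, hi, fun h => hc h.1⟩)
    refine ⟨hf, hr, ?_⟩
    simp [truncSuc, hf]
    rfl

theorem trunc_isPos_aux {g : TermGraph S.bot N} {d : ℕ} (hd : d ≠ 0) {π : List ℕ} {x : TNode g d}
    (h : (g.trunc d).IsPos π x) : ∀ n, x.1 = Sum.inl n → g.IsPos π n := by
  induction h with
  | root =>
    intro n hn
    simp [trunc, truncRoot, hd] at hn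
    exact hn ▸ IsPos.root
  | @step π x h i ih =>
    intro n hn
    obtain ⟨x | p, hx⟩ := x
    · have hi : (i : ℕ) < S.bot.ar (g.lab x) := i.2
      rcases truncSuc_inl x hx i hi with ⟨hf, e⟩ | ⟨hf, hr, e⟩
      · have e' : (g.trunc d).suc ⟨Sum.inl x, hx⟩ i = ⟨Sum.inr (x, (i : ℕ)), hf⟩ := e
        rw [e'] at hn
        simp at hn
      · have e' : (g.trunc d).suc ⟨Sum.inl x, hx⟩ i = ⟨Sum.inl (g.suc x ⟨i, hi⟩), hr⟩ := e
        rw [e'] at hn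
        simp at hn
        subst hn
        exact (ih x rfl).step ⟨i, hi⟩
    · exact absurd i.isLt (Nat.not_lt_zero _)

theorem trunc_isPos_of {g : TermGraph S.bot N} {d : ℕ} (hd : d ≠ 0) {π : List ℕ} {n : N}
    (h : g.IsPos π n) (ha : g.IsAcyclicPos π) (hn : g.Retained d n) :
    (g.trunc d).IsPos π ⟨Sum.inl n, hn⟩ := by
  induction h with
  | root =>
    have : (g.trunc d).root = ⟨Sum.inl g.root, hn⟩ := by
      simp [trunc, truncRoot, hd]
      rfl
    exact this ▸ IsPos.root
  | @step π n h i ih =>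
    have hp : n ∈ g.acyPred (g.suc n i) := ⟨π, i, ⟨h.step i, ha⟩, h⟩
    have hr : g.Retained d n := .pred hn hp
    have := ih (acyclic_prefix ha) hr
    refine isPos_snoc.2 ⟨_, this, i.2, ?_⟩
    rcases truncSuc_inl n hr i i.2 with ⟨hf, e⟩ | ⟨hf, hr, e⟩
    · obtain ⟨_, hi, h3⟩ := (isFringe_iff hd).1 hf
      exact absurd ⟨hn, fun _ => hp⟩ h3
    · exact e

/-- Truncation preserves acyclic positions. -/
theorem trunc_nodePosAcy {g : TermGraph S.bot N} {d : ℕ} (hd : d ≠ 0) {n : N}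
    (hn : g.Retained d n) :
    (g.trunc d).nodePosAcy ⟨Sum.inl n, hn⟩ = g.nodePosAcy n := by
  have bot : ∀ {x : TNode g d} {π i y} , (g.trunc d).IsPos π x → (g.trunc d).IsPos (π ++ [i]) y →
      ∃ n hn, x = ⟨Sum.inl n, hn⟩ := by
    intro x π i y h1 h2
    obtain ⟨k, hk, hi, _⟩ := isPos_snoc.1 h2
    obtain rfl := isPos_det h1 hk
    obtain ⟨x | p, hx⟩ := x
    · exact ⟨_, _, rfl⟩
    · exact absurd hi (Nat.not_lt_zero _)
  ext π
  constructor
  · rintro ⟨h1, h2⟩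
    refine ⟨trunc_isPos_aux hd h1 n rfl, ?_⟩
    have pre : ∀ π₁, π₁ <+: π → ∀ m, g.IsPos π₁ m →
        ∃ hm, (g.trunc d).IsPos π₁ ⟨Sum.inl m, hm⟩ := by
      rintro π₁ ⟨a, rfl⟩ m hm
      obtain ⟨x, hx⟩ := isPos_prefix h1
      have : ∃ n hn, x = ⟨Sum.inl n, hn⟩ := by
        cases a with
        | nil =>
          rw [List.append_nil] at h1
          exact ⟨n, hn, isPos_det hx h1⟩
        | cons i a =>
          rw [List.append_cons] at h1
          obtain ⟨y, hy⟩ := isPos_prefix h1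
          exact bot hx hy
      obtain ⟨n', hn', rfl⟩ := this
      obtain rfl := isPos_det hm (trunc_isPos_aux hd hx n' rfl)
      exact ⟨hn', hx⟩
    intro π₁ π₂ m p1 p2 q1 q2
    obtain ⟨_, r1⟩ := pre π₁ (p1.trans p2) m q1
    obtain ⟨_, r2⟩ := pre π₂ p2 m q2
    exact h2 π₁ π₂ _ p1 p2 r1 r2
  · rintro ⟨h1, h2⟩
    have h3 := trunc_isPos_of hd h1 h2 hn
    refine ⟨h3, ?_⟩
    rintro π₁ π₂ x p1 p2 q1 q2
    by_cases hx : ∃ n, x.1 = Sum.inl n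
    · obtain ⟨m, hm⟩ := hx
      exact h2 π₁ π₂ m p1 p2 (trunc_isPos_aux hd q1 m hm) (trunc_isPos_aux hd q2 m hm)
    · obtain ⟨a, rfl⟩ := p1
      cases a with
      | nil => simp
      | cons i a =>
        rw [List.append_cons] at q2
        obtain ⟨y, hy⟩ := isPos_prefix q2
        obtain ⟨n', hn', rfl⟩ := bot q1 hy
        exact absurd ⟨n', rfl⟩ hx

theorem Iso.trunc_hs {g : TermGraph S.bot N} {h : TermGraph S.bot M} {d : ℕ}
    (tg : g.Total) (H : Iso (g.trunc d) (h.trunc d)) : HS d g h := by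
  obtain ⟨φ, ψ, H, H', l, r⟩ := H
  intro n hn
  have hd : d ≠ 0 := by
    rintro rfl
    exact not_retained_zero n hn
  have key : ∀ n (hn : g.Retained d n), ∃ m hm, φ ⟨Sum.inl n, hn⟩ = ⟨Sum.inl m, hm⟩ ∧
      g.nodePosAcy n = h.nodePosAcy m ∧ g.lab n = h.lab m := by
    intro n hn
    have e1 := H.lab_eq ⟨Sum.inl n, hn⟩ (by simp)
    have e2 := iso_nodePosAcy H H' l ⟨Sum.inl n, hn⟩
    rcases hy : φ ⟨Sum.inl n, hn⟩ with ⟨m | p, hm⟩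
    · refine ⟨m, hm, rfl, ?_, ?_⟩
      · rw [hy] at e2
        exact (trunc_nodePosAcy hd hn).symm.trans (e2.trans (trunc_nodePosAcy hd hm))
      · rw [hy] at e1
        exact e1.symm
    · rw [hy] at e1
      exact absurd e1.symm (tg n)
  obtain ⟨m, hm, e1, e2, e3⟩ := key n hn
  refine ⟨m, e2, e3, fun i hi hi' hf => ?_⟩
  have hs := H.suc_eq ⟨Sum.inl n, hn⟩ (by simp) i hi (by rw [e1]; exact hi')
  have hs' : φ (truncSuc g d ⟨Sum.inl n, hn⟩ ⟨i, hi⟩) = truncSuc h d ⟨Sum.inl m, hm⟩ ⟨i, hi'⟩ := by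
    exact Eq.trans hs (suc_congr (h.trunc d) e1 _ _)
  rcases truncSuc_inl n hn i hi with ⟨hfr, e⟩ | ⟨hfr, hr, e⟩
  · obtain ⟨_, _, h3⟩ := (isFringe_iff hd).1 hfr
    exact absurd hf h3
  rw [e] at hs'
  obtain ⟨m', hm', f1, f2, f3⟩ := key _ hr
  rw [f1] at hs'
  rcases truncSuc_inl m hm i hi' with ⟨hfr', e'⟩ | ⟨hfr', hr', e'⟩
  · rw [e'] at hs'
    exact absurd (congrArg Subtype.val hs') (by simp)
  · rw [e'] at hs'
    have := congrArg Subtype.val hs'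
    simp at this
    rw [f2, this]

/-- The relation on truncation nodes. -/
def TRel {g : TermGraph S.bot N} {h : TermGraph S.bot M} {d : ℕ} (x : TNode g d) (y : TNode h d) :
    Prop :=
  (∃ n m, x.1 = Sum.inl n ∧ y.1 = Sum.inl m ∧ g.nodePosAcy n = h.nodePosAcy m) ∨
  (∃ n m i, x.1 = Sum.inr (n, i) ∧ y.1 = Sum.inr (m, i) ∧ g.nodePosAcy n = h.nodePosAcy m)

theorem TRel.symm {g : TermGraph S.bot N} {h : TermGraph S.bot M} {d : ℕ} {x : TNode g d}
    {y : TNode h d} (H : TRel x y) : TRel y x := by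
  rcases H with ⟨n, m, h1, h2, h3⟩ | ⟨n, m, i, h1, h2, h3⟩
  · exact Or.inl ⟨m, n, h2, h1, h3.symm⟩
  · exact Or.inr ⟨m, n, i, h2, h1, h3.symm⟩

theorem TRel.unique {g : TermGraph S.bot N} {h : TermGraph S.bot M} (hh : h.Reachable)
    {d : ℕ} {x : TNode g d} {y z : TNode h d} (H : TRel x y) (H' : TRel x z) : y = z := by
  apply Subtype.ext
  rcases H with ⟨n, m, h1, h2, h3⟩ | ⟨n, m, i, h1, h2, h3⟩ <;>
  rcases H' with ⟨n', m', h1', h2', h3'⟩ | ⟨n', m', i', h1', h2', h3'⟩ <;>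
  rw [h1] at h1' <;> simp at h1'
  · subst h1'
    rw [h2, h2', node_eq hh (h3.symm.trans h3')]
  · obtain ⟨rfl, rfl⟩ := h1'
    rw [h2, h2', node_eq hh (h3.symm.trans h3')]

theorem HS.exists_hom {g : TermGraph S.bot N} {h : TermGraph S.bot M} {d : ℕ} (hd : d ≠ 0)
    (hg : g.Reachable) (hh : h.Reachable) (H : HS d g h) (H' : HS d h g) :
    ∃ φ, IsDHom ∅ (g.trunc d) (h.trunc d) φ ∧ ∀ x, TRel x (φ x) := by
  have nf : ∀ n m (_ : g.Retained d n) (e : g.nodePosAcy n = h.nodePosAcy m),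
      g.lab n = h.lab m ∧ h.Retained d m ∧ ∀ i hi hi',
      (g.NF d n ⟨i, hi⟩ ↔ h.NF d m ⟨i, hi'⟩) ∧ (g.NF d n ⟨i, hi⟩ →
      g.nodePosAcy (g.suc n ⟨i, hi⟩) = h.nodePosAcy (h.suc m ⟨i, hi'⟩)) := by
    intro n m hn e
    obtain ⟨m', h1, h2, h3⟩ := H n hn
    obtain rfl := node_eq hh (e.symm.trans h1)
    have hm := H.rm.retained hg hh hn e
    obtain ⟨n', k1, k2, k3⟩ := H' m hm
    obtain rfl := node_eq hg (e.trans k1)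
    refine ⟨h2, hm, fun i hi hi' => ⟨⟨fun hf => ?_, fun hf => ?_⟩, h3 i hi hi'⟩⟩
    · exact H.rm.nf hg hh e (h3 i hi hi' hf) hf
    · exact H'.rm.nf hh hg k1 (k3 i hi' hi hf) hf
  have fr : ∀ n m (_ : g.Retained d n) (e : g.nodePosAcy n = h.nodePosAcy m) i,
      g.IsFringe d (n, i) ↔ h.IsFringe d (m, i) := by
    intro n m hn e i
    rw [isFringe_iff hd, isFringe_iff hd]
    obtain ⟨h1, hm, h2⟩ := nf n m hn e
    constructor
    · rintro ⟨-, hi, h3⟩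
      have hi' : i < S.bot.ar (h.lab m) := h1 ▸ hi
      exact ⟨hm, hi', fun h4 => h3 ((h2 i hi hi').1.2 h4)⟩
    · rintro ⟨-, hi', h3⟩
      have hi : i < S.bot.ar (g.lab n) := h1 ▸ hi'
      exact ⟨hn, hi, fun h4 => h3 ((h2 i hi hi').1.1 h4)⟩
  have ex : ∀ x : TNode g d, ∃ y : TNode h d, TRel x y := by
    rintro ⟨n | ⟨n, i⟩, hx⟩
    · obtain ⟨m, e, _⟩ := H n hx
      exact ⟨⟨Sum.inl m, H.rm.retained hg hh hx e⟩, Or.inl ⟨n, m, rfl, rfl, e⟩⟩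
    · have hn := ((isFringe_iff hd).1 hx).1
      obtain ⟨m, e, _⟩ := H n hn
      exact ⟨⟨Sum.inr (m, i), (fr n m hn e i).1 hx⟩, Or.inr ⟨n, m, i, rfl, rfl, e⟩⟩
  choose φ hφ using ex
  refine ⟨φ, ⟨?_, ?_, ?_⟩, hφ⟩
  · refine TRel.unique hh (hφ _) (Or.inl ⟨g.root, h.root, ?_, ?_, ?_⟩)
    · simp [trunc, truncRoot, hd]
    · simp [trunc, truncRoot, hd]
    · obtain ⟨m, h1, h2, -⟩ := H.match_pos hh IsPos.root (Nat.pos_of_ne_zero hd)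
      rw [isPos_nil h1] at h2
      exact h2
  · rintro x -
    rcases hφ x with ⟨n, m, h1, h2, h3⟩ | ⟨n, m, i, h1, h2, h3⟩
    · have hn : g.Retained d n := by have := x.2; rw [h1] at this; exact this
      show truncLab _ _ _ = truncLab _ _ _
      unfold truncLab
      rw [h1, h2]
      exact (nf n m hn h3).1.symm
    · show truncLab _ _ _ = truncLab _ _ _
      unfold truncLab
      rw [h1, h2]
      rfl
  · rintro ⟨n | p, hx⟩ - i hi hi'
    · refine TRel.unique hh (hφ _) ?_
      obtain ⟨y, hy⟩ : ∃ y, φ ⟨Sum.inl n, hx⟩ = y := ⟨_, rfl⟩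
      obtain ⟨m | q, hm⟩ := y
      · have e : g.nodePosAcy n = h.nodePosAcy m := by
          have := hφ ⟨Sum.inl n, hx⟩
          rw [hy] at this
          rcases this with ⟨n, m, h1, h2, h3⟩ | ⟨n, m, i, h1, h2, h3⟩
          · simp at h1 h2
            rw [h1, h2, h3]
          · simp at h1
        obtain ⟨e1, hm', e2⟩ := nf n m hx e
        have hi₁ : i < S.bot.ar (g.lab n) := hi
        have hi₂ : i < S.bot.ar (h.lab m) := e1 ▸ hi₁
        have es : (h.trunc d).suc (φ ⟨Sum.inl n, hx⟩) ⟨i, hi'⟩ =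
            truncSuc h d ⟨Sum.inl m, hm⟩ ⟨i, hi₂⟩ := by
          exact suc_congr (h.trunc d) hy _ _
        have goal : TRel (truncSuc g d ⟨Sum.inl n, hx⟩ ⟨i, hi₁⟩)
            (truncSuc h d ⟨Sum.inl m, hm⟩ ⟨i, hi₂⟩) := by
          rcases truncSuc_inl n hx i hi₁ with ⟨hf, q⟩ | ⟨hf, hr, q⟩ <;>
          rcases truncSuc_inl m hm i hi₂ with ⟨hf', q'⟩ | ⟨hf', hr', q'⟩
          · rw [q, q']
            exact Or.inr ⟨n, m, i, rfl, rfl, e⟩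
          · exact absurd ((fr n m hx e i).1 hf) hf'
          · exact absurd ((fr n m hx e i).2 hf') hf
          · rw [q, q']
            refine Or.inl ⟨_, _, rfl, rfl, (e2 i hi₁ hi₂).2 ?_⟩
            by_contra hc
            exact hf ((isFringe_iff hd).2 ⟨hx, hi₁, hc⟩)
        rw [← es] at goal
        exact goal
      · have := hφ ⟨Sum.inl n, hx⟩
        rw [hy] at this
        rcases this with ⟨n, m, h1, h2, h3⟩ | ⟨n, m, i, h1, h2, h3⟩
        · simp at h2
        · simp at h1
    · exact absurd hi (Nat.not_lt_zero _)

theorem iso_trunc_zero (g : TermGraph S.bot N) (h : TermGraph S.bot M) :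
    Iso (g.trunc 0) (h.trunc 0) := by
  have uniq : ∀ {N : Type} (g : TermGraph S.bot N) (x : TNode g 0), x = (g.trunc 0).root := by
    intro N g x
    obtain ⟨n | p, hx⟩ := x
    · exact absurd hx (not_retained_zero n)
    · have : p = (g.root, 0) := by simpa [IsFringe] using hx
      apply Subtype.ext
      simp [trunc, truncRoot, this]
  have lab : ∀ {N : Type} (g : TermGraph S.bot N) (x : TNode g 0), (g.trunc 0).lab x = none := by
    intro N g x
    rw [uniq g x]
    simp [trunc, truncRoot, truncLab]
    rfl
  refine ⟨fun _ => (h.trunc 0).root, fun _ => (g.trunc 0).root, ⟨rfl, ?_, ?_⟩, ⟨rfl, ?_, ?_⟩, ?_, ?_⟩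
  · intro n _
    rw [lab, lab]
  · intro n _ i hi hi'
    exact (uniq _ _).symm
  · intro n _
    rw [lab, lab]
  · intro n _ i hi hi'
    exact (uniq _ _).symm
  · intro n
    exact (uniq _ _).symm
  · intro n
    exact (uniq _ _).symm

theorem HS.iso {g : TermGraph S.bot N} {h : TermGraph S.bot M} {d : ℕ}
    (hg : g.Reachable) (hh : h.Reachable) (H : HS d g h) (H' : HS d h g) :
    Iso (g.trunc d) (h.trunc d) := by
  by_cases hd : d = 0
  · subst hd
    exact iso_trunc_zero g h
  obtain ⟨φ, h1, h2⟩ := H.exists_hom hd hg hh H'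
  obtain ⟨ψ, k1, k2⟩ := H'.exists_hom hd hh hg H
  exact ⟨φ, ψ, h1, k1, fun n => TRel.unique hg (k2 _) (h2 n).symm,
    fun n => TRel.unique hh (h2 _) (k2 n).symm⟩

end Trunc
end TermGraph
end TGR

namespace TGR
open TermGraph Filter

theorem TermGraph.ext_of_pos {S : Signature} {N : Type} (t t' : TermGraph S N)
    (hr : t.Reachable) (hp : ∀ π n, t.IsPos π n ↔ t'.IsPos π n)
    (hl : ∀ n, t.lab n = t'.lab n) : t = t' := by
  obtain ⟨lab, suc, root⟩ := t
  obtain ⟨lab', suc', root'⟩ := t'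
  obtain rfl : lab = lab' := funext hl
  have e1 : root = root' := isPos_nil ((hp _ _).1 IsPos.root)
  have e2 : suc = suc' := by
    funext n i
    obtain ⟨π, h⟩ := hr n
    have h1 := (hp _ _).1 (h.step i)
    have h2 := ((hp _ _).1 h).step i
    exact isPos_det h1 h2
  rw [e1, e2]

theorem CTG.coe_node {S : Signature} (g : CTG S) {π : List ℕ} {n : g.nodes}
    (h : g.tg.IsPos π n) : (n : Set (List ℕ)) = {ρ | g.tg.Aliases π ρ} := by
  rw [g.canon n]
  ext ρ
  constructor
  · intro h'
    exact ⟨n, h, h'⟩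
  · rintro ⟨m, h1, h2⟩
    obtain rfl := isPos_det h h1
    exact h2

theorem CTG.ext_of_aliases {S : Signature} (g h : CTG S)
    (ha : ∀ π π', g.tg.Aliases π π' ↔ h.tg.Aliases π π')
    (hl : ∀ π n m, g.tg.IsPos π n → h.tg.IsPos π m → g.tg.lab n = h.tg.lab m) : g = h := by
  have half : ∀ (g h : CTG S) (_ : ∀ π π', g.tg.Aliases π π' ↔ h.tg.Aliases π π'),
      g.nodes ⊆ h.nodes := by
    intro g h ha A hA
    obtain ⟨π, hp⟩ := g.reach ⟨A, hA⟩
    obtain ⟨m, hm, -⟩ := (ha π π).1 ⟨_, hp, hp⟩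
    have e1 := g.coe_node hp
    have e2 := h.coe_node hm
    simp only [ha] at e1
    rw [← e2] at e1
    change A = _ at e1
    rw [e1]
    exact m.2
  have e : g.nodes = h.nodes := (half g h ha).antisymm (half h g (fun _ _ => (ha _ _).symm))
  obtain ⟨N, t, r, c⟩ := g
  obtain ⟨N', t', r', c'⟩ := h
  simp only at e
  subst e
  have hp : ∀ π n, t.IsPos π n ↔ t'.IsPos π n := by
    intro π n
    have := (c n).symm.trans (c' n)
    exact Set.ext_iff.1 this π
  obtain rfl : t = t' := by
    refine TermGraph.ext_of_pos t t' r hp (fun n => ?_)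
    obtain ⟨π, h⟩ := r n
    exact hl π n n h ((hp _ _).1 h)
  rfl

theorem LQT.nil_mem {S : Signature} (L : LQT S) : [] ∈ L.P := by
  obtain ⟨π, h⟩ := L.nonempty
  induction π using List.reverseRecOn with
  | nil => exact h
  | append_singleton π i ih => exact ih (L.reach_mem _ _ h)

theorem LQT.exists_ctg {S : Signature} (L : LQT S) :
    ∃ g : CTG S, (∀ π π', g.tg.Aliases π π' ↔ L.rel π π') ∧
      ∀ π n, g.tg.IsPos π n → g.tg.lab n = L.l π := by
  let cls : List ℕ → Set (List ℕ) := fun π => {π' | L.rel π π'}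
  have cls_eq : ∀ {π π'}, L.rel π π' → cls π = cls π' := by
    intro π π' h
    ext ρ
    exact ⟨fun h' => L.rel_trans _ _ _ (L.rel_symm _ _ h) h', fun h' => L.rel_trans _ _ _ h h'⟩
  let nodes : Set (Set (List ℕ)) := {A | ∃ π ∈ L.P, A = cls π}
  have hrep : ∀ A : nodes, ∃ π ∈ L.P, A.1 = cls π := fun A => A.2
  choose rep rep_mem rep_eq using hrep
  have rep_rel : ∀ (A : nodes) π, π ∈ A.1 ↔ L.rel (rep A) π := by
    intro A π
    rw [rep_eq A]
    rfl
  let tg : TermGraph S nodes :=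
    { lab := fun A => L.l (rep A)
      suc := fun A i => ⟨cls (rep A ++ [(i : ℕ)]), _,
        (L.rel_mem _ _ (L.congr_suc _ _ i (L.rel_refl _ (rep_mem A)) i.2)).1, rfl⟩
      root := ⟨cls [], [], L.nil_mem, rfl⟩ }
  have p1 : ∀ π A, tg.IsPos π A → π ∈ A.1 := by
    intro π A h
    induction h with
    | root => exact L.rel_refl _ L.nil_mem
    | @step π A h i ih => exact L.congr_suc _ _ i ((rep_rel _ _).1 ih) i.2
  have p2 : ∀ π (A : nodes), π ∈ A.1 → tg.IsPos π A := by
    intro π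
    induction π using List.reverseRecOn with
    | nil =>
      intro A hA
      have : A = tg.root := by
        apply Subtype.ext
        change A.1 = cls []
        rw [rep_eq A]
        exact cls_eq ((rep_rel _ _).1 hA)
      rw [this]
      exact .root
    | append_singleton π i ih =>
      intro A hA
      have hm := (L.rel_mem _ _ ((rep_rel _ _).1 hA)).2
      have hm' := L.reach_mem _ _ hm
      have har := L.reach_ar _ _ hm
      have hB := ih ⟨cls π, π, hm', rfl⟩ (L.rel_refl _ hm')
      have hr := (rep_rel ⟨cls π, π, hm', rfl⟩ π).1 (L.rel_refl _ hm')
      have hi : i < S.ar (L.l (rep ⟨cls π, π, hm', rfl⟩)) := by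
        rw [L.congr_lab _ _ hr]
        exact har
      refine isPos_snoc.2 ⟨_, hB, hi, ?_⟩
      apply Subtype.ext
      change cls (rep _ ++ [i]) = _
      rw [rep_eq A, cls_eq (L.congr_suc _ _ i hr hi)]
      exact (cls_eq ((rep_rel _ _).1 hA)).symm
  refine ⟨⟨nodes, tg, ?_, ?_⟩, ?_, ?_⟩
  · intro A
    exact ⟨rep A, p2 _ _ ((rep_rel _ _).2 (L.rel_refl _ (rep_mem A)))⟩
  · intro A
    ext π
    exact ⟨p2 _ _, p1 _ _⟩
  · intro π π'
    constructor
    · rintro ⟨A, h1, h2⟩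
      exact L.rel_trans _ _ _ (L.rel_symm _ _ ((rep_rel _ _).1 (p1 _ _ h1)))
        ((rep_rel _ _).1 (p1 _ _ h2))
    · intro h
      have hm := (L.rel_mem _ _ h).1
      exact ⟨⟨cls π, π, hm, rfl⟩, p2 _ _ (L.rel_refl _ hm), p2 _ _ h⟩
  · intro π A h
    exact L.congr_lab _ _ ((rep_rel _ _).1 (p1 _ _ h))

theorem TermGraph.labAt_eq {S : Signature} {N : Type} {g : TermGraph S N} {π : List ℕ} {n : N}
    (h : g.IsPos π n) : g.labAt π = g.lab n := by
  have hex : ∃ n, g.IsPos π n := ⟨n, h⟩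
  have : g.nodeAt π = n := by
    unfold nodeAt
    rw [dif_pos hex]
    exact isPos_det hex.choose_spec h
  rw [labAt, this]

theorem exists_limit_lqt {S : Signature} (f : ℕ → CTG S) (Nf : ℕ → ℕ)
    (hN : ∀ d a b, Nf d ≤ a → Nf d ≤ b → HS d (f a).tg (f b).tg) :
    ∃ L : LQT S, (∀ d a π π', Nf d ≤ a → π.length < d → π'.length < d →
        (L.rel π π' ↔ (f a).tg.Aliases π π')) ∧
      ∀ d a π n, Nf d ≤ a → π.length < d → (f a).tg.IsPos π n → (f a).tg.lab n = L.l π := by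
  let l : List ℕ → S.Sym := fun π => (f (Nf (π.length + 1))).tg.labAt π
  let rel : List ℕ → List ℕ → Prop := fun π π' => ∀ᶠ a in atTop, (f a).tg.Aliases π π'
  have labfact : ∀ d a π n, Nf d ≤ a → π.length < d → (f a).tg.IsPos π n →
      (f a).tg.lab n = l π := by
    intro d a π n ha hl hp
    obtain ⟨m, hm, -, e1⟩ := (hN d a (max a (Nf (π.length + 1))) ha
      (ha.trans (le_max_left _ _))).match_pos (f _).reach hp hl
    obtain ⟨k, hk, -, e2⟩ := (hN (π.length + 1) _ (Nf (π.length + 1)) (le_max_right a _)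
      le_rfl).match_pos (f _).reach hm (Nat.lt_succ_self _)
    rw [e1, e2]
    exact (labAt_eq hk).symm
  have relfact : ∀ d a π π', Nf d ≤ a → π.length < d → π'.length < d →
        (rel π π' ↔ (f a).tg.Aliases π π') := by
    intro d a π π' ha hl hl'
    constructor
    · intro h
      obtain ⟨b, hb, hb'⟩ := (h.and (eventually_ge_atTop (Nf d))).exists
      exact (hN d b a hb' ha).aliases (f _).reach hl hl' hb
    · intro h
      filter_upwards [eventually_ge_atTop (Nf d)] with b hb
      exact (hN d a b ha hb).aliases (f _).reach hl hl' h
  refine ⟨{ P := {π | rel π π}, nonempty := ?_, l := l, rel := rel, rel_refl := ?_, rel_symm := ?_,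
            rel_trans := ?_, rel_mem := ?_, reach_mem := ?_, reach_ar := ?_, congr_lab := ?_,
            congr_suc := ?_ }, relfact, labfact⟩
  · exact ⟨[], Eventually.of_forall fun a => ⟨_, .root, .root⟩⟩
  · exact fun π h => h
  · intro π π' h
    filter_upwards [h] with a ⟨n, h1, h2⟩ using ⟨n, h2, h1⟩
  · intro π π' π'' h h'
    filter_upwards [h, h'] with a ⟨n, h1, h2⟩ ⟨m, h3, h4⟩
    obtain rfl := isPos_det h2 h3
    exact ⟨n, h1, h4⟩
  · intro π π' h
    constructor
    · filter_upwards [h] with a ⟨n, h1, h2⟩ using ⟨n, h1, h1⟩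
    · filter_upwards [h] with a ⟨n, h1, h2⟩ using ⟨n, h2, h2⟩
  · intro π i h
    filter_upwards [h] with a ⟨n, h1, h2⟩
    obtain ⟨m, hm, -⟩ := isPos_snoc.1 h1
    exact ⟨m, hm, hm⟩
  · intro π i h
    obtain ⟨a, ⟨n, h1, h2⟩, ha⟩ :=
      (Eventually.and h (eventually_ge_atTop (Nf (π.length + 1)))).exists
    obtain ⟨m, hm, hi, -⟩ := isPos_snoc.1 h1
    rw [← labfact _ a π m ha (Nat.lt_succ_self _) hm]
    exact hi
  · intro π π' h
    obtain ⟨a, ⟨⟨n, h1, h2⟩, ha⟩, ha'⟩ := (((Eventually.and h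
      (eventually_ge_atTop (Nf (π.length + 1)))).and
      (eventually_ge_atTop (Nf (π'.length + 1))))).exists
    rw [← labfact _ a π n ha (Nat.lt_succ_self _) h1,
      ← labfact _ a π' n ha' (Nat.lt_succ_self _) h2]
  · intro π π' i h hi
    filter_upwards [h, eventually_ge_atTop (Nf (π.length + 1))] with a ⟨n, h1, h2⟩ ha
    have hi' : i < S.ar ((f a).tg.lab n) := by
      rw [labfact _ a π n ha (Nat.lt_succ_self _) h1]
      exact hi
    exact ⟨_, h1.step ⟨i, hi'⟩, h2.step ⟨i, hi'⟩⟩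

theorem TermGraph.acyclic_iff {S : Signature} {N : Type} {g : TermGraph S N} {π : List ℕ} :
    g.IsAcyclicPos π ↔ ∀ π₁ π₂, π₁ <+: π₂ → π₂ <+: π → g.Aliases π₁ π₂ → π₁ = π₂ :=
  ⟨fun h π₁ π₂ p1 p2 ⟨n, q1, q2⟩ => h π₁ π₂ n p1 p2 q1 q2,
    fun h π₁ π₂ n p1 p2 q1 q2 => h π₁ π₂ p1 p2 ⟨n, q1, q2⟩⟩

theorem TermGraph.mem_nodePosAcy_iff {S : Signature} {N : Type} {g : TermGraph S N}
    {π ρ : List ℕ} {n : N} (h : g.IsPos π n) :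
    ρ ∈ g.nodePosAcy n ↔ g.Aliases π ρ ∧ g.IsAcyclicPos ρ := by
  constructor
  · rintro ⟨h1, h2⟩
    exact ⟨⟨n, h, h1⟩, h2⟩
  · rintro ⟨⟨m, h1, h2⟩, h3⟩
    obtain rfl := isPos_det h h1
    exact ⟨h2, h3⟩

theorem exists_limit {S : Signature} (f : ℕ → CTG S) (Nf : ℕ → ℕ)
    (hN : ∀ d a b, Nf d ≤ a → Nf d ≤ b → HS d (f a).tg (f b).tg) :
    ∃ g : CTG S, (∀ d a, Nf d ≤ a → HS d (f a).tg g.tg ∧ HS d g.tg (f a).tg) ∧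
      ∀ n, ∃ a m, g.tg.lab n = (f a).tg.lab m := by
  obtain ⟨L, L1, L2⟩ := exists_limit_lqt f Nf hN
  obtain ⟨g, G1, G2⟩ := L.exists_ctg
  have A1 : ∀ d a π π', Nf d ≤ a → π.length < d → π'.length < d →
      (g.tg.Aliases π π' ↔ (f a).tg.Aliases π π') := by
    intro d a π π' ha h1 h2
    rw [G1, L1 d a π π' ha h1 h2]
  have A2 : ∀ d a π n m, Nf d ≤ a → π.length < d → g.tg.IsPos π n → (f a).tg.IsPos π m →
      g.tg.lab n = (f a).tg.lab m := by
    intro d a π n m ha hl h1 h2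
    rw [G2 π n h1, L2 d a π m ha hl h2]
  have pa : ∀ d a π ρ m k, Nf d ≤ a → π.length < d → ρ.length < d → g.tg.IsPos π m →
      (f a).tg.IsPos π k → (ρ ∈ g.tg.nodePosAcy m ↔ ρ ∈ (f a).tg.nodePosAcy k) := by
    intro d a π ρ m k ha h1 h2 h3 h4
    rw [mem_nodePosAcy_iff h3, mem_nodePosAcy_iff h4, A1 d a π ρ ha h1 h2,
      acyclic_iff, acyclic_iff]
    refine and_congr_right fun _ => forall_congr' fun π₁ => forall_congr' fun π₂ => ?_
    refine imp_congr_right fun p1 => imp_congr_right fun p2 => ?_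
    rw [A1 d a π₁ π₂ ha ((p1.trans p2).length_le.trans_lt h2) (p2.length_le.trans_lt h2)]
  have match1 : ∀ d a k π, Nf d ≤ a → (f a).tg.Retained d k → π ∈ (f a).tg.nodePosAcy k →
      ∃ m, g.tg.IsPos π m ∧ (f a).tg.nodePosAcy k = g.tg.nodePosAcy m := by
    intro d a k π ha hk hπ
    have gen : ∀ e, ∃ b k', Nf e ≤ b ∧ (f a).tg.nodePosAcy k = (f b).tg.nodePosAcy k' := by
      intro e
      obtain ⟨k', h1, -⟩ := hN d a (max a (Nf e)) ha (ha.trans (le_max_left _ _)) k hk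
      exact ⟨_, k', le_max_right _ _, h1⟩
    have hm : ∃ m, g.tg.IsPos π m := by
      obtain ⟨b, k', hb, e⟩ := gen (π.length + 1)
      have hp : (f b).tg.IsPos π k' := by
        rw [e] at hπ
        exact hπ.1
      obtain ⟨m, hm, -⟩ := (A1 _ b π π hb (Nat.lt_succ_self _) (Nat.lt_succ_self _)).2 ⟨_, hp, hp⟩
      exact ⟨m, hm⟩
    obtain ⟨m, hm⟩ := hm
    refine ⟨m, hm, ?_⟩
    ext ρ
    obtain ⟨b, k', hb, e⟩ := gen (max π.length ρ.length + 1)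
    rw [e] at hπ ⊢
    exact (pa _ b π ρ m k' hb (by omega) (by omega) hm hπ.1).symm
  have H1 : ∀ d a, Nf d ≤ a → HS d (f a).tg g.tg := by
    intro d a ha k hk
    obtain ⟨π, hπ, -⟩ := exists_min_pos (f a).reach k
    obtain ⟨m, hm, e⟩ := match1 d a k π ha hk hπ
    refine ⟨m, e, ?_, fun i hi hi' hf => ?_⟩
    · obtain ⟨k', h1, h2, -⟩ := hN d a (max a (Nf (π.length + 1))) ha
        (ha.trans (le_max_left _ _)) k hk
      rw [h1] at hπ
      rw [h2]
      exact (A2 _ _ π m k' (le_max_right _ _) (Nat.lt_succ_self _) hm hπ.1).symm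
    · ext ρ
      obtain ⟨k', h1, h2, h3⟩ := hN d a (max a (Nf (max (π.length + 1) ρ.length + 1))) ha
        (ha.trans (le_max_left _ _)) k hk
      rw [h1] at hπ
      rw [h3 i hi (h2 ▸ hi) hf]
      refine (pa _ _ (π ++ [i]) ρ _ _ (le_max_right _ _) ?_ ?_ (hm.step ⟨i, hi'⟩)
        (hπ.1.step ⟨i, h2 ▸ hi⟩)).symm
      · simp
      · omega
  have match2 : ∀ d a m, Nf d ≤ a → g.tg.Retained d m →
      ∃ k, (f a).tg.Retained d k ∧ g.tg.nodePosAcy m = (f a).tg.nodePosAcy k := by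
    intro d a m ha hm
    induction hm with
    | @shallow m hd =>
      obtain ⟨π, hπ, hl⟩ := exists_min_pos g.reach m
      rw [← hl] at hd
      obtain ⟨k, hk, -⟩ := (A1 d a π π ha hd hd).1 ⟨m, hπ.1, hπ.1⟩
      have hr : (f a).tg.Retained d k := .shallow ((depth_le hk).trans_lt hd)
      obtain ⟨m', h1, h2⟩ := match1 d a k π ha hr ((pa d a π π m k ha hd hd hπ.1 hk).1 hπ)
      obtain rfl := isPos_det h1 hπ.1
      exact ⟨k, hr, h2.symm⟩
    | @pred m m2 hr hp ih =>
      obtain ⟨k, hk, e⟩ := ih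
      obtain ⟨π, j, h1, h2⟩ := hp
      rw [e] at h1
      obtain ⟨k2, h3, -⟩ := isPos_snoc.1 h1.1
      have hr2 : (f a).tg.Retained d k2 := .pred hk ⟨π, j, h1, h3⟩
      obtain ⟨m', h4, h5⟩ := match1 d a k2 π ha hr2 ⟨h3, acyclic_prefix h1.2⟩
      obtain rfl := isPos_det h4 h2
      exact ⟨k2, hr2, h5.symm⟩
  have H2 : ∀ d a, Nf d ≤ a → HS d g.tg (f a).tg := by
    intro d a ha m hm
    obtain ⟨k, hk, e⟩ := match2 d a m ha hm
    obtain ⟨m', e1, e2, -⟩ := H1 d a ha k hk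
    obtain rfl := node_eq g.reach (e.trans e1)
    refine ⟨k, e, e2.symm, fun i hi hi' hf => ?_⟩
    obtain ⟨π, hπ, -⟩ := exists_min_pos g.reach m
    obtain ⟨k3, hk3, e3⟩ := match2 d a _ ha hf.1
    obtain ⟨σ, hσ, -⟩ := exists_min_pos (f a).reach k3
    obtain ⟨b, hb1, hb2⟩ : ∃ b, a ≤ b ∧ Nf (max (π.length + 1) σ.length + 1) ≤ b :=
      ⟨_, le_max_left _ _, le_max_right _ _⟩
    obtain ⟨k', u1, u2, -⟩ := hN d a b ha (ha.trans hb1) k hk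
    obtain ⟨k3', v1, v2, -⟩ := hN d a b ha (ha.trans hb1) k3 hk3
    have hσg : g.tg.IsPos σ (g.tg.suc m ⟨i, hi⟩) := by
      have := hσ
      rw [← e3] at this
      exact this.1
    have hσb : (f b).tg.IsPos σ k3' := by
      have := hσ
      rw [v1] at this
      exact this.1
    have hπb : (f b).tg.IsPos π k' := by
      have := hπ
      rw [e, u1] at this
      exact this.1
    have hib : i < S.ar ((f b).tg.lab k') := u2 ▸ hi'
    obtain ⟨w, w1, w2⟩ := (A1 _ b (π ++ [i]) σ hb2 (by simp) (by omega)).1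
      ⟨_, hπ.1.step ⟨i, hi⟩, hσg⟩
    obtain rfl := isPos_det w2 hσb
    obtain rfl := isPos_det w1 (hπb.step ⟨i, hib⟩)
    have nfb : (f b).tg.NF d k' ⟨i, hib⟩ := by
      have rm : RM d g.tg (f b).tg := fun n hn =>
        let ⟨k, _, h⟩ := match2 d b n (ha.trans hb1) hn
        ⟨k, h⟩
      exact rm.nf g.reach (f b).reach (e.trans u1) (e3.trans v1) hf
    obtain ⟨k'', x1, x2, x3⟩ := hN d b a (ha.trans hb1) ha k'
      ((hN d a b ha (ha.trans hb1)).rm.retained (f a).reach (f b).reach hk u1)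
    obtain rfl := node_eq (f a).reach (u1.trans x1)
    rw [e3, v1]
    exact x3 i hib hi' nfb
  refine ⟨g, fun d a ha => ⟨H1 d a ha, H2 d a ha⟩, fun n => ?_⟩
  obtain ⟨π, hπ⟩ := g.reach n
  obtain ⟨k, hk, -⟩ := (A1 _ _ π π (le_refl (Nf (π.length + 1))) (Nat.lt_succ_self _)
    (Nat.lt_succ_self _)).1 ⟨n, hπ, hπ⟩
  exact ⟨_, k, A2 _ _ π n k le_rfl (Nat.lt_succ_self _) hπ hk⟩

/-- Similarity at depth `d`. -/
def SimD {S : Signature} (d : ℕ) (g h : CTG S) : Prop := HS d g.tg h.tg ∧ HS d h.tg g.tg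

theorem le_simr_iff {S : Signature} {g h : CTG S.bot} (tg : g.Total) (th : h.Total) (d : ℕ) :
    (d : ℕ∞) ≤ CTG.simr g h ↔ SimD d g h := by
  constructor
  · intro hd
    rcases Nat.eq_zero_or_pos d with rfl | hpos
    · exact ⟨fun n hn => absurd hn (not_retained_zero n), fun n hn => absurd hn (not_retained_zero n)⟩
    · have hlt : ((d - 1 : ℕ) : ℕ∞) < CTG.simr g h :=
        lt_of_lt_of_le (by exact_mod_cast Nat.sub_lt hpos one_pos) hd
      obtain ⟨e, he, hlt⟩ := lt_sSup_iff.1 hlt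
      induction e using ENat.recTopCoe with
      | top => exact ⟨(he.1 rfl).hs d, (he.1 rfl).symm.hs d⟩
      | coe e =>
        have hde : d ≤ e := by
          have : d - 1 < e := by exact_mod_cast hlt
          omega
        exact ⟨((he.2 e rfl).trunc_hs tg).mono hde, ((he.2 e rfl).symm.trunc_hs th).mono hde⟩
  · intro H
    apply le_sSup
    refine ⟨fun h => absurd h (ENat.coe_ne_top d), fun k hk => ?_⟩
    obtain rfl : d = k := by exact_mod_cast hk
    exact H.1.iso g.reach h.reach H.2

theorem rdist_le_iff {S : Signature} {g h : CTG S.bot} (tg : g.Total) (th : h.Total) (d : ℕ) :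
    CTG.rdist g h ≤ (1 / 2 : ℝ) ^ d ↔ SimD d g h := by
  rw [← le_simr_iff tg th]
  unfold CTG.rdist
  generalize CTG.simr g h = s
  induction s using ENat.recTopCoe with
  | top => simp
  | coe e =>
    rw [if_neg (ENat.coe_ne_top e)]
    simp only [ENat.toNat_coe, Nat.cast_le]
    exact pow_le_pow_iff_right_of_lt_one₀ (by norm_num) (by norm_num)

theorem rdist_cases {S : Signature} (g h : CTG S.bot) :
    CTG.rdist g h = 0 ∨ ∃ d : ℕ, CTG.rdist g h = (1 / 2 : ℝ) ^ d := by
  unfold CTG.rdist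
  split_ifs
  · exact Or.inl rfl
  · exact Or.inr ⟨_, rfl⟩

theorem le_of_forall_pow {g : ℝ} {x : ℝ} (hx : x = 0 ∨ ∃ d : ℕ, x = (1 / 2 : ℝ) ^ d)
    (h : ∀ d : ℕ, x ≤ (1 / 2 : ℝ) ^ d → g ≤ (1 / 2 : ℝ) ^ d) : g ≤ x := by
  rcases hx with rfl | ⟨d, rfl⟩
  · have := tendsto_pow_atTop_nhds_zero_of_lt_one (r := (1 / 2 : ℝ)) (by norm_num) (by norm_num)
    exact ge_of_tendsto' this fun d => h d (by positivity)
  · exact h d le_rfl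

theorem eq_of_simD {S : Signature} {g h : CTG S} (H : ∀ d, SimD d g h) : g = h := by
  refine CTG.ext_of_aliases g h (fun π π' => ⟨fun ha => ?_, fun ha => ?_⟩) (fun π n m hn hm => ?_)
  · exact (H (max π.length π'.length + 1)).1.aliases h.reach (by omega) (by omega) ha
  · exact (H (max π.length π'.length + 1)).2.aliases g.reach (by omega) (by omega) ha
  · obtain ⟨m', h1, -, h2⟩ := (H (π.length + 1)).1.match_pos h.reach hn (by omega)
    obtain rfl := isPos_det h1 hm
    exact h2

theorem rigid_metric_complete_ultrametric (S : Signature) :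
    (∀ g h : CTG S.bot, g.Total → h.Total → (CTG.rdist g h = 0 ↔ g = h)) ∧
    (∀ g h : CTG S.bot, g.Total → h.Total → CTG.rdist g h = CTG.rdist h g) ∧
    (∀ g₁ g₂ g₃ : CTG S.bot, g₁.Total → g₂.Total → g₃.Total →
      CTG.rdist g₁ g₃ ≤ max (CTG.rdist g₁ g₂) (CTG.rdist g₂ g₃)) ∧
    (∀ f : ℕ → CTG S.bot, (∀ n, (f n).Total) →
      (∀ ε : ℝ, 0 < ε → ∃ N : ℕ, ∀ m n : ℕ, N ≤ m → N ≤ n →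
        CTG.rdist (f m) (f n) < ε) →
      ∃ g : CTG S.bot, g.Total ∧
        ∀ ε : ℝ, 0 < ε → ∃ N : ℕ, ∀ n : ℕ, N ≤ n → CTG.rdist (f n) g < ε) := by
  have nonneg : ∀ g h : CTG S.bot, 0 ≤ CTG.rdist g h := by
    intro g h
    rcases rdist_cases g h with e | ⟨d, e⟩ <;> rw [e]
    positivity
  have refl : ∀ g : CTG S.bot, ∀ d, SimD d g g := fun g d =>
    ⟨fun n _ => ⟨n, rfl, rfl, fun _ _ _ _ => rfl⟩, fun n _ => ⟨n, rfl, rfl, fun _ _ _ _ => rfl⟩⟩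
  have symm : ∀ g h : CTG S.bot, g.Total → h.Total → CTG.rdist g h ≤ CTG.rdist h g := by
    intro g h tg th
    refine le_of_forall_pow (rdist_cases _ _) fun d hd => ?_
    rw [rdist_le_iff th tg] at hd
    rw [rdist_le_iff tg th]
    exact hd.symm
  refine ⟨?_, ?_, ?_, ?_⟩
  · intro g h tg th
    constructor
    · intro e
      refine eq_of_simD fun d => ?_
      rw [← rdist_le_iff tg th, e]
      positivity
    · rintro rfl
      refine le_antisymm ?_ (nonneg _ _)
      exact le_of_forall_pow (Or.inl rfl) fun d _ => (rdist_le_iff tg tg d).2 (refl g d)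
  · intro g h tg th
    exact le_antisymm (symm g h tg th) (symm h g th tg)
  · intro g₁ g₂ g₃ t₁ t₂ t₃
    refine le_of_forall_pow ?_ fun d hd => ?_
    · rcases max_choice (CTG.rdist g₁ g₂) (CTG.rdist g₂ g₃) with e | e <;> rw [e] <;>
        exact rdist_cases _ _
    · obtain ⟨h1, h2⟩ := max_le_iff.1 hd
      rw [rdist_le_iff t₁ t₂] at h1
      rw [rdist_le_iff t₂ t₃] at h2
      rw [rdist_le_iff t₁ t₃]
      exact ⟨h1.1.trans g₁.reach g₂.reach h2.1, h2.2.trans g₃.reach g₂.reach h1.2⟩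
  · intro f tf hc
    have ex : ∀ d : ℕ, ∃ N : ℕ, ∀ a b, N ≤ a → N ≤ b → SimD d (f a) (f b) := by
      intro d
      obtain ⟨N, h⟩ := hc ((1 / 2 : ℝ) ^ d) (by positivity)
      exact ⟨N, fun a b ha hb => (rdist_le_iff (tf a) (tf b) d).1 (h a b ha hb).le⟩
    choose Nf hN using ex
    obtain ⟨g, hg, hl⟩ := exists_limit f Nf fun d a b ha hb => (hN d a b ha hb).1
    have tg : g.Total := by
      intro n
      obtain ⟨a, m, e⟩ := hl n
      rw [e]
      exact tf a m
    refine ⟨g, tg, fun ε hε => ?_⟩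
    obtain ⟨d, hd⟩ := exists_pow_lt_of_lt_one hε (show (1 / 2 : ℝ) < 1 by norm_num)
    exact ⟨Nf d, fun n hn => ((rdist_le_iff (tf n) tg d).2 (hg d n hn)).trans_lt hd⟩

end TGR
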